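/- Fix ε ∈ ℂ∖{0} and t, α, H, r, s ∈ ℂ, and let q, p ∈ ℂ with p² = q⁴ + tq² − 2αq + 2H. Let A(x) be the matrix with entries A₁₁(x) = r + (x² + p − q²)/ε, A₁₂(x) = (x − q)/ε, A₂₁(x) = −2s − 1 − 2r(x + q) + ((x + q)(t − 2p + 2q²) − 2α)/ε, A₂₂(x) = −A₁₁(x). Then for every x ∈ ℂ with x ≠ q one has −det A(x) + A₁₁′(x) − A₁₁(x)·A₁₂′(x)/A₁₂(x) + (3/4)·(A₁₂′(x)/A₁₂(x))² − A₁₂″(x)/(2A₁₂(x)) = ε⁻²Q₀(x) + ε⁻¹Q₁(x) + Q₂(x), where Q₀(x) = x⁴ + tx² − 2αx + 2H, Q₁(x) = −p/(x − q) + 2pr − 2s(x − q), and Q₂(x) = 3/(4(x − q)²) − r/(x − q) + r². -/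

import Mathlib

/-!
The entry `A₁₂ = (x - q) / ε` is affine in `x`, so its logarithmic derivative is `1 / (x - q)` and
its second derivative vanishes: all poles of the oper potential come from this logarithmic
derivative. The remaining term `-det A = A₁₁² + A₁₂ A₂₁` is a polynomial in `x`. With
`V x = x⁴ + t x² - 2 α x`, its `ε⁻²` part is `V x - V q + p²`, which the spectral constraint turns
into `V x + 2 H`. Its `ε⁻¹` part contains `-(x - q)`, which cancels the polynomial part of
`A₁₁' - A₁₁ / (x - q)`.
-/

section Connection

variable {K : Type*} [Field K]

/-- The connection matrix `A(x)` of the Painlevé II pencil of connections `d - A(x) dx`. -/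
def painleveTwoConnection (ε t α r s q p x : K) : Matrix (Fin 2) (Fin 2) K :=
  !![r + (x ^ 2 + p - q ^ 2) / ε, (x - q) / ε;
     -2 * s - 1 - 2 * r * (x + q) + ((x + q) * (t - 2 * p + 2 * q ^ 2) - 2 * α) / ε,
     -(r + (x ^ 2 + p - q ^ 2) / ε)]

theorem neg_det_painleveTwoConnection {t α H q p : K}
    (hspec : p ^ 2 = q ^ 4 + t * q ^ 2 - 2 * α * q + 2 * H) (ε r s x : K) :
    -(painleveTwoConnection ε t α r s q p x).det =
      ε⁻¹ ^ 2 * (x ^ 4 + t * x ^ 2 - 2 * α * x + 2 * H)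
        + ε⁻¹ * (2 * p * r - (2 * s + 1) * (x - q)) + r ^ 2 := by
  rw [painleveTwoConnection, Matrix.det_fin_two_of]
  linear_combination ε⁻¹ ^ 2 * hspec

end Connection

section OperPotential

variable {𝕜 : Type*} [NontriviallyNormedField 𝕜]

/-- The potential `Q` of the oper `d - !![0, 1; Q, 0] dx` to which a traceless rank-two connection
`d - A dx` is brought by the gauge transformation that is singular at the zeros of `A₁₂`.
Matrix indices start at `0`, so `A₁₁` and `A₁₂` are `A x 0 0` and `A x 0 1`. -/
noncomputable def operPotential (A : 𝕜 → Matrix (Fin 2) (Fin 2) 𝕜) (x : 𝕜) : 𝕜 :=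
  -(A x).det + deriv (fun y => A y 0 0) x
    - A x 0 0 * deriv (fun y => A y 0 1) x / A x 0 1
    + 3 / 4 * (deriv (fun y => A y 0 1) x / A x 0 1) ^ 2
    - deriv (deriv fun y => A y 0 1) x / (2 * A x 0 1)

theorem operPotential_of_apply_zero_one_eq_sub_div {A : 𝕜 → Matrix (Fin 2) (Fin 2) 𝕜} {ε q : 𝕜}
    (hε : ε ≠ 0) (hA : ∀ y, A y 0 1 = (y - q) / ε) (x : 𝕜) :
    operPotential A x = -(A x).det + (deriv (fun y => A y 0 0) x - A x 0 0 / (x - q))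
      + 3 / (4 * (x - q) ^ 2) := by
  have deriv_entry : deriv (fun y => A y 0 1) = fun _ => 1 / ε := by
    funext y
    simp only [hA, deriv_div_const, deriv_sub_const, deriv_id'']
  have logDeriv_entry : 1 / ε / ((x - q) / ε) = 1 / (x - q) := div_div_div_cancel_right₀ hε _ _
  have double_pole : 3 / 4 * (1 / (x - q)) ^ 2 = 3 / (4 * (x - q) ^ 2) := by
    rw [one_div_pow, div_mul_div_comm, mul_one]
  rw [operPotential, deriv_entry, deriv_const, hA, mul_div_assoc, logDeriv_entry, double_pole]
  ring

theorem deriv_painleveTwoConnection_zero_zero (ε t α r s q p x : 𝕜) :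
    deriv (fun y => painleveTwoConnection ε t α r s q p y 0 0) x = 2 * x / ε := by
  simp [painleveTwoConnection]

theorem deriv_sub_div_painleveTwoConnection_zero_zero {q x : 𝕜} (hx : x ≠ q) (ε t α r s p : 𝕜) :
    deriv (fun y => painleveTwoConnection ε t α r s q p y 0 0) x
        - painleveTwoConnection ε t α r s q p x 0 0 / (x - q) =
      ε⁻¹ * (x - q - p / (x - q)) - r / (x - q) := by
  have hxq : (x - q) / (x - q) = 1 := div_self (sub_ne_zero.mpr hx)
  rw [deriv_painleveTwoConnection_zero_zero]
  simp only [painleveTwoConnection, Matrix.of_apply, Matrix.cons_val_zero]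
  linear_combination -(x + q) / ε * hxq

theorem stmt14_general [NeZero (2 : 𝕜)] {ε t α H q p x : 𝕜} (hε : ε ≠ 0)
    (hspec : p ^ 2 = q ^ 4 + t * q ^ 2 - 2 * α * q + 2 * H) (hx : x ≠ q) (r s : 𝕜) :
    operPotential (painleveTwoConnection ε t α r s q p) x =
      ε⁻¹ ^ 2 * (x ^ 4 + t * x ^ 2 - 2 * α * x + 2 * H)
        + ε⁻¹ * (-p / (x - q) + 2 * p * r - 2 * s * (x - q))
        + (3 / (4 * (x - q) ^ 2) - r / (x - q) + r ^ 2) := by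
  rw [operPotential_of_apply_zero_one_eq_sub_div hε fun _ => rfl,
    neg_det_painleveTwoConnection hspec, deriv_sub_div_painleveTwoConnection_zero_zero hx]
  ring

end OperPotential

theorem stmt14
    (ε : ℂ) (hε : ε ≠ 0) (t α H r s q p : ℂ)
    (hspec : p ^ 2 = q ^ 4 + t * q ^ 2 - 2 * α * q + 2 * H)
    (A : ℂ → Matrix (Fin 2) (Fin 2) ℂ)
    (hA : ∀ x : ℂ, A x =
      !![r + (x ^ 2 + p - q ^ 2) / ε, (x - q) / ε;
         -2 * s - 1 - 2 * r * (x + q)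
           + ((x + q) * (t - 2 * p + 2 * q ^ 2) - 2 * α) / ε,
         -(r + (x ^ 2 + p - q ^ 2) / ε)]) :
    ∀ x : ℂ, x ≠ q →
      -(A x).det + deriv (fun y => r + (y ^ 2 + p - q ^ 2) / ε) x
        - (r + (x ^ 2 + p - q ^ 2) / ε) * deriv (fun y => (y - q) / ε) x
            / ((x - q) / ε)
        + (3 / 4) * (deriv (fun y => (y - q) / ε) x / ((x - q) / ε)) ^ 2
        - deriv (deriv (fun y => (y - q) / ε)) x / (2 * ((x - q) / ε))
      = ε⁻¹ ^ 2 * (x ^ 4 + t * x ^ 2 - 2 * α * x + 2 * H)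
        + ε⁻¹ * (-p / (x - q) + 2 * p * r - 2 * s * (x - q))
        + (3 / (4 * (x - q) ^ 2) - r / (x - q) + r ^ 2) := by
  obtain rfl : A = painleveTwoConnection ε t α r s q p := funext hA
  exact fun x hx => stmt14_general hε hspec hx r s
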